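/- For every finite simple graph H with tree-depth td(H) ≥ 3 and every integer N ≥ 1, the graph G(td(H)−1, N) contains no H minor and is not (td(H)−2, N)-colourable. Consequently, for every integer d there exists a finite simple graph with no H minor that is not (td(H)−2, d)-colourable. -/

import Mathlib

/-!
Write `G(1, N)` for the one-vertex graph. Then for every `s ≥ 2` the graph `G(s, N)` is the cone
over `N + 1` disjoint copies of `G(s - 1, N)`, and both halves of the theorem are inductions over
this construction.

Disjoint copies do not increase the tree-depth and a cone increases it by at most one, so
`td(G(s, N)) ≤ s`. Tree-depth is minor-monotone: a connected set of vertices has a least element in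
any forest order, and comparing the least elements of the branch sets of an `H` minor is a forest
order on `H`. Hence `G(td(H) - 1, N)` has no `H` minor.

In a colouring of the cone with defect at most `N`, the colour of the apex cannot occur in all
`N + 1` copies of `G(s - 1, N)`. A copy that avoids it is coloured with one colour fewer, so by
induction a colouring of `G(s, N)` with defect at most `N` needs `s` colours.
-/

open SimpleGraph

universe u v

section Defs

variable {V : Type u} {α : Type v}

/-- `H` is isomorphic to a subgraph of `G`: there is an injective graph homomorphism. -/
def ContainsSubgraph (G : SimpleGraph V) (H : SimpleGraph α) : Prop :=
  ∃ f : H →g G, Function.Injective f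

/-- `G` is `(k,d)`-choosable: for every assignment of lists of exactly `k` colours there is a
colouring from the lists in which every vertex has at most `d` neighbours of its own colour. -/
def Choosable (G : SimpleGraph V) (k : ℕ) (d : ℤ) : Prop :=
  ∀ L : V → Finset ℕ, (∀ v, (L v).card = k) →
    ∃ c : V → ℕ, (∀ v, c v ∈ L v) ∧
      ∀ v, (({w | G.Adj v w ∧ c w = c v}.ncard : ℤ)) ≤ d

/-- `G` is `(k,d)`-colourable: the vertices can be `k`-coloured with every vertex having at most
`d` neighbours of its own colour. -/
def DefColorable (G : SimpleGraph V) (k d : ℕ) : Prop :=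
  ∃ c : V → Fin k, ∀ v, {w | G.Adj v w ∧ c w = c v}.ncard ≤ d

/-- `H` is a minor of `G`, via pairwise disjoint connected branch sets. -/
def IsMinor (H : SimpleGraph α) (G : SimpleGraph V) : Prop :=
  ∃ B : α → Set V,
    (∀ a, (B a).Nonempty) ∧
    (∀ a, (G.induce (B a)).Connected) ∧
    (Pairwise fun a b => Disjoint (B a) (B b)) ∧
    (∀ a b, H.Adj a b → ∃ x ∈ B a, ∃ y ∈ B b, G.Adj x y)

/-- A subdivision of `H` whose path lengths all satisfy `lenOK` occurs as a subgraph of `G`: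
the branch vertices are embedded injectively by `f`, each edge of `H` is replaced by a path of
`G` between the corresponding branch vertices, internal vertices of these paths avoid branch
vertices, and distinct paths meet only in common endpoints. -/
def HasSubdivWith (G : SimpleGraph V) (H : SimpleGraph α) (lenOK : ℕ → Prop) : Prop :=
  ∃ f : α → V, Function.Injective f ∧
    ∃ P : ∀ ⦃a b : α⦄, H.Adj a b → G.Walk (f a) (f b),
      (∀ ⦃a b⦄ (h : H.Adj a b), (P h).IsPath ∧ lenOK (P h).length) ∧
      (∀ ⦃a b⦄ (h : H.Adj a b) (c : α), f c ∈ (P h).support → c = a ∨ c = b) ∧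
      (∀ ⦃a b⦄ (h : H.Adj a b) ⦃a' b'⦄ (h' : H.Adj a' b'), s(a, b) ≠ s(a', b') →
        ∀ x ∈ (P h).support, x ∈ (P h').support →
          (x = f a ∨ x = f b) ∧ (x = f a' ∨ x = f b'))

/-- Some `(≤ k)`-subdivision of `H` (each edge replaced by a path of length at most `k+1`)
is a subgraph of `G`. -/
def HasSubdivLE (G : SimpleGraph V) (k : ℕ) (H : SimpleGraph α) : Prop :=
  HasSubdivWith G H fun L => L ≤ k + 1

/-- `H` is a topological minor of `G`: some subdivision of `H` is a subgraph of `G`. -/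
def HasTopMinor (G : SimpleGraph V) (H : SimpleGraph α) : Prop :=
  HasSubdivWith G H fun _ => True

/-- The exact `1`-subdivision of `H`: every edge is subdivided exactly once. -/
def exactOneSubdivision (H : SimpleGraph α) : SimpleGraph (α ⊕ H.edgeSet) :=
  SimpleGraph.fromRel fun x y =>
    match x, y with
    | Sum.inl a, Sum.inr e => a ∈ (e : Sym2 α)
    | _, _ => False

/-- The graph `K*_{s,t}`: `K_{s,t}` together with `binom s 2` new vertices, each adjacent to a
distinct pair of vertices on the side of size `s`. -/
def KstarGraph (s t : ℕ) :
    SimpleGraph (Fin s ⊕ (Fin t ⊕ {p : Fin s × Fin s // p.1 < p.2})) :=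
  SimpleGraph.fromRel fun x y =>
    match x, y with
    | Sum.inl _, Sum.inr (Sum.inl _) => True
    | Sum.inl a, Sum.inr (Sum.inr c) => a = c.1.1 ∨ a = c.1.2
    | _, _ => False

/-- The auxiliary function `N₁(s,t,δ,δ₁)`. -/
noncomputable def N1 (s t : ℕ) (δ δ₁ : ℝ) : ℝ :=
  if s = 1 then (t : ℝ) - 1
  else if s = 2 then (δ - 2) * δ₁ * t / 2 + δ
  else (δ - s) * ((Nat.choose ⌊δ₁⌋₊ (s - 1) : ℝ) * ((t : ℝ) - 1) + δ₁ / 2) + δ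

/-- The maximum average degree of `G`: maximum of `2|E(H)|/|V(H)|` over nonempty subgraphs. -/
noncomputable def mad [Fintype V] (G : SimpleGraph V) : ℝ :=
  sSup {q : ℝ | ∃ H : G.Subgraph, H.verts.Nonempty ∧
    q = 2 * (H.edgeSet.ncard : ℝ) / (H.verts.ncard : ℝ)}

/-- `∇₀(G)`: maximum of `|E(H)|/|V(H)|` over nonempty subgraphs of `G`. -/
noncomputable def nabla0 [Fintype V] (G : SimpleGraph V) : ℝ :=
  sSup {q : ℝ | ∃ H : G.Subgraph, H.verts.Nonempty ∧
    q = (H.edgeSet.ncard : ℝ) / (H.verts.ncard : ℝ)}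

/-- `∇₁(G)`: maximum of `|E(H)|/|V(H)|` over graphs `H` some `(≤2)`-subdivision of which is a
subgraph of `G`. -/
noncomputable def nabla1 [Fintype V] (G : SimpleGraph V) : ℝ :=
  sSup {q : ℝ | ∃ (n : ℕ) (H : SimpleGraph (Fin n)), 0 < n ∧
    HasSubdivLE G 2 H ∧ q = (H.edgeSet.ncard : ℝ) / (n : ℝ)}

end Defs

/-- The vertex type of the graph `G(s,N)` (here indexed by `t = s - 2`). -/
def GVert : ℕ → ℕ → Type
  | 0, N => Fin (N + 2)
  | t + 1, N => Option (Fin (N + 1) × GVert t N)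

/-- The graph `G(s,N)` (indexed by `t = s - 2`): `GGraph 0 N = G(2,N) = K_{1,N+1}`, and
`GGraph (t+1) N = G(t+3,N)` is obtained from `N+1` disjoint copies of `GGraph t N` by adding
a dominant vertex. -/
def GGraph : (t : ℕ) → (N : ℕ) → SimpleGraph (GVert t N)
  | 0, N => SimpleGraph.fromRel fun i j => i = (0 : Fin (N + 2))
  | t + 1, N => SimpleGraph.fromRel fun x y =>
      match x, y with
      | none, some _ => True
      | some (i, a), some (j, b) => i = j ∧ (GGraph t N).Adj a b
      | _, _ => False

section More

variable {V : Type u} {α : Type v}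

/-- `r` is a forest order witnessing that `H` is a subgraph of the closure of a rooted forest:
`r` is a partial order in which the set of ancestors of each vertex is a chain, and adjacent
vertices of `H` are comparable. -/
def IsForestOrder (H : SimpleGraph α) (r : α → α → Prop) : Prop :=
  IsPartialOrder α r ∧ (∀ v : α, IsChain r {u | r u v}) ∧
    (∀ x y, H.Adj x y → r x y ∨ r y x)

/-- The tree-depth of `H`: the minimum height of a rooted forest whose closure contains `H`
as a subgraph (the height being measured as the maximum number of vertices on a
root--to--leaf path). -/
noncomputable def treeDepth (H : SimpleGraph α) : ℕ :=
  sInf {k | ∃ r : α → α → Prop, IsForestOrder H r ∧ ∀ v, {u | r u v}.ncard ≤ k}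

/-- The vertex cover number `τ(H)`. -/
noncomputable def vertexCoverNumber (H : SimpleGraph α) : ℕ :=
  sInf {k | ∃ S : Set α, S.ncard = k ∧ ∀ ⦃x y⦄, H.Adj x y → x ∈ S ∨ y ∈ S}

/-- The graph obtained from `ℓ` disjoint copies of the star `K_{1,k}` by adding one dominant
vertex. -/
def Hlk (l k : ℕ) : SimpleGraph (Option (Fin l × Fin (k + 1))) :=
  SimpleGraph.fromRel fun x y =>
    match x, y with
    | none, some _ => True
    | some (i, a), some (j, _) => i = j ∧ a = 0
    | _, _ => False

/-- The star `K_{1,k}` together with `m` isolated vertices. -/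
def StarPlusIsolated (k m : ℕ) : SimpleGraph (Fin (k + 1) ⊕ Fin m) :=
  SimpleGraph.fromRel fun x y =>
    match x, y with
    | Sum.inl i, Sum.inl _ => i = 0
    | _, _ => False

/-- `G` admits a `k`-stack layout: a linear ordering of the vertices (given by an injection
into `ℕ`) and an assignment of the edges to `k` stacks so that no two edges in a common stack
cross. -/
def HasStackLayout (G : SimpleGraph V) (k : ℕ) : Prop :=
  ∃ f : V → ℕ, Function.Injective f ∧
    ∃ σ : Sym2 V → Fin k,
      ∀ a b c d : V, G.Adj a b → G.Adj c d → σ s(a, b) = σ s(c, d) →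
        ¬(f a < f c ∧ f c < f b ∧ f b < f d)

/-- `G` admits a `k`-queue layout: a linear ordering of the vertices (given by an injection
into `ℕ`) and an assignment of the edges to `k` queues so that no two edges in a common queue
are nested. -/
def HasQueueLayout (G : SimpleGraph V) (k : ℕ) : Prop :=
  ∃ f : V → ℕ, Function.Injective f ∧
    ∃ σ : Sym2 V → Fin k,
      ∀ a b c d : V, G.Adj a b → G.Adj c d → σ s(a, b) = σ s(c, d) →
        ¬(f a < f c ∧ f c < f d ∧ f d < f b)

end More

/-! ### Tree-depth is minor-monotone -/

section Minor

variable {V : Type u} {α : Type v} {G : SimpleGraph V} {H : SimpleGraph α} {r : V → V → Prop}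

theorem IsForestOrder.rel_or_rel (hr : IsForestOrder G r) {x y z : V} (hx : r x z) (hy : r y z) :
    r x y ∨ r y x := by
  obtain rfl | hxy := eq_or_ne x y
  · exact Or.inl (hr.1.refl x)
  · exact hr.2.1 z hx hy hxy

theorem IsForestOrder.rel_of_minimal (hr : IsForestOrder G r) {B : Set V}
    (hB : (G.induce B).Preconnected) {m x : V} (hmB : m ∈ B) (hmin : ∀ y ∈ B, r y m → y = m)
    (hx : x ∈ B) : r m x := by
  have ⟨hpo, _, hcomp⟩ := hr
  have hreach := (reachable_iff_reflTransGen _ _).1 (hB ⟨m, hmB⟩ ⟨x, hx⟩)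
  suffices ∀ y : B, Relation.ReflTransGen (G.induce B).Adj ⟨m, hmB⟩ y → r m y from this _ hreach
  intro y hy
  induction hy with
  | refl => exact hpo.refl m
  | @tail y z _ hadj hmy =>
    rcases hcomp y z hadj with hyz | hzy
    · exact hpo.trans _ _ _ hmy hyz
    · rcases hr.rel_or_rel hmy hzy with hmz | hzm
      · exact hmz
      · exact hmin z z.2 hzm ▸ hpo.refl _

theorem IsForestOrder.exists_minimal_mem (hr : IsForestOrder G r)
    (hfin : ∀ v, {u | r u v}.Finite) {B : Set V} (hne : B.Nonempty) :
    ∃ m ∈ B, ∀ y ∈ B, r y m → y = m := by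
  obtain ⟨hpo, -, -⟩ := hr
  let _ : PartialOrder V :=
    { le := r
      le_refl := hpo.refl
      le_trans := hpo.trans
      le_antisymm := hpo.antisymm }
  obtain ⟨a, ha⟩ := hne
  obtain ⟨m, ⟨hma, hmB⟩, hmin⟩ :=
    ((hfin a).inter_of_left B).exists_minimal ⟨a, hpo.refl a, ha⟩
  exact ⟨m, hmB, fun y hy hym =>
    hpo.antisymm _ _ hym (hmin ⟨hpo.trans _ _ _ hym hma, hy⟩ hym)⟩

theorem IsForestOrder.exists_least_of_connected (hr : IsForestOrder G r)
    (hfin : ∀ v, {u | r u v}.Finite) {B : Set V} (hB : (G.induce B).Connected) :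
    ∃ m ∈ B, ∀ x ∈ B, r m x := by
  obtain ⟨m, hmB, hmin⟩ := hr.exists_minimal_mem hfin (Set.nonempty_coe_sort.1 hB.nonempty)
  exact ⟨m, hmB, fun x hx => hr.rel_of_minimal hB.preconnected hmB hmin hx⟩

theorem IsMinor.exists_isForestOrder (hM : IsMinor H G) (hr : IsForestOrder G r)
    (hfin : ∀ v, {u | r u v}.Finite) :
    ∃ f : α → V, Function.Injective f ∧ IsForestOrder H fun a b => r (f a) (f b) := by
  obtain ⟨B, -, hconn, hdisj, hedge⟩ := hM
  choose m hmB hleast using fun a => hr.exists_least_of_connected hfin (hconn a)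
  have hinj : Function.Injective m := fun a b hab =>
    hdisj.eq (Set.not_disjoint_iff.2 ⟨m a, hmB a, hab ▸ hmB b⟩)
  have ⟨hpo, _, hcomp⟩ := hr
  refine ⟨m, hinj, ?_, fun _ a ha b hb _ => hr.rel_or_rel ha hb, fun a b hab => ?_⟩
  · exact
      { refl := fun a => hpo.refl _
        trans := fun a b c => hpo.trans _ _ _
        antisymm := fun a b hab hba => hinj (hpo.antisymm _ _ hab hba) }
  · obtain ⟨x, hx, y, hy, hxy⟩ := hedge a b hab
    rcases hcomp x y hxy with hxy | hyx
    · exact hr.rel_or_rel (hpo.trans _ _ _ (hleast a x hx) hxy) (hleast b y hy)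
    · exact hr.rel_or_rel (hleast a x hx) (hpo.trans _ _ _ (hleast b y hy) hyx)

theorem IsForestOrder.treeDepth_le {k : ℕ} (hr : IsForestOrder G r)
    (hk : ∀ v, {u | r u v}.ncard ≤ k) : treeDepth G ≤ k :=
  Nat.sInf_le ⟨r, hr, hk⟩

theorem exists_isForestOrder_ncard_le_treeDepth [Finite V] (G : SimpleGraph V) :
    ∃ r, IsForestOrder G r ∧ ∀ v, {u | r u v}.ncard ≤ treeDepth G := by
  obtain ⟨_, -⟩ := exists_wellFoundedLT V
  have hle : IsForestOrder G (· ≤ ·) :=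
    ⟨inferInstance, fun _ a _ b _ _ => le_total a b, fun x y _ => le_total x y⟩
  have hne : {k | ∃ r, IsForestOrder G r ∧ ∀ v, {u | r u v}.ncard ≤ k}.Nonempty :=
    ⟨Nat.card V, _, hle, fun _ => Set.ncard_le_card _⟩
  exact Nat.sInf_mem hne

theorem IsMinor.treeDepth_le [Finite V] (hM : IsMinor H G) : treeDepth H ≤ treeDepth G := by
  obtain ⟨r, hr, hk⟩ := exists_isForestOrder_ncard_le_treeDepth G
  obtain ⟨f, hf, hfr⟩ := hM.exists_isForestOrder hr fun _ => Set.toFinite _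
  exact hfr.treeDepth_le fun v =>
    (Set.ncard_le_ncard_of_injOn f (fun _ hu => hu) hf.injOn).trans (hk (f v))

theorem ContainsSubgraph.of_iso (e : H ≃g G) : ContainsSubgraph G H :=
  ⟨e.toHom, e.injective⟩

theorem ContainsSubgraph.isMinor (h : ContainsSubgraph G H) : IsMinor H G := by
  obtain ⟨f, hf⟩ := h
  refine ⟨fun a => {f a}, fun a => Set.singleton_nonempty _, fun a => ?_,
    fun a b hab => Set.disjoint_singleton.2 (hf.ne hab),
    fun a b hab => ⟨f a, rfl, f b, rfl, f.map_adj hab⟩⟩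
  rw [induce_singleton_eq_top]
  exact connected_top

theorem treeDepth_le_of_iso [Finite V] (e : H ≃g G) : treeDepth H ≤ treeDepth G :=
  (ContainsSubgraph.of_iso e).isMinor.treeDepth_le

end Minor

/-! ### Cones over disjoint copies -/

section Cone

variable {V : Type u} {ι : Type v}

/-- The disjoint union of copies of `G` indexed by `ι`, encoded as the box product of `G` with the
edgeless graph on `ι`. -/
abbrev disjointCopies (ι : Type v) (G : SimpleGraph V) : SimpleGraph (ι × V) :=
  (⊥ : SimpleGraph ι) □ G

/-- The cone over `G`: the graph obtained from `G` by adding one vertex, the apex `none`, adjacent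
to all vertices of `G`. -/
def coneGraph (G : SimpleGraph V) : SimpleGraph (Option V) where
  Adj
    | none, none => False
    | none, some _ => True
    | some _, none => True
    | some a, some b => G.Adj a b
  symm := ⟨by
    rintro (_ | a) (_ | b) h
    exacts [h, h, h, h.symm]⟩
  loopless := ⟨by
    rintro (_ | a) h
    exacts [h, G.irrefl h]⟩

/-- The order on the vertices of a cone that extends `r` and has the apex as its least element. -/
def coneRel (r : V → V → Prop) : Option V → Option V → Prop
  | none, _ => True
  | some _, none => False
  | some a, some b => r a b

theorem IsForestOrder.cone {G : SimpleGraph V} {r : V → V → Prop} (hr : IsForestOrder G r) :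
    IsForestOrder (coneGraph G) (coneRel r) := by
  have ⟨hpo, _, hcomp⟩ := hr
  refine ⟨{ refl := ?_, trans := ?_, antisymm := ?_ }, ?_, ?_⟩
  · rintro (_ | a)
    exacts [trivial, hpo.refl a]
  · rintro (_ | a) (_ | b) (_ | c) hab hbc
    all_goals first | trivial | exact hab.elim | exact hbc.elim | exact hpo.trans _ _ _ hab hbc
  · rintro (_ | a) (_ | b) hab hba
    exacts [rfl, hba.elim, hab.elim, congrArg some (hpo.antisymm _ _ hab hba)]
  · rintro (_ | c) (_ | a) ha (_ | b) hb -
    exacts [.inl trivial, hb.elim, ha.elim, ha.elim, .inl trivial, .inl trivial, .inr trivial,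
      hr.rel_or_rel ha hb]
  · rintro (_ | a) (_ | b) hab
    exacts [hab.elim, .inl trivial, .inr trivial, hcomp a b hab]

theorem treeDepth_coneGraph_le [Finite V] (G : SimpleGraph V) :
    treeDepth (coneGraph G) ≤ treeDepth G + 1 := by
  obtain ⟨r, hr, hk⟩ := exists_isForestOrder_ncard_le_treeDepth G
  refine hr.cone.treeDepth_le fun x => ?_
  cases x with
  | none =>
    have hsub : {a | coneRel r a none} ⊆ {none} := by
      rintro (_ | a) ha
      exacts [rfl, ha.elim]
    calc {a | coneRel r a none}.ncard
        ≤ ({none} : Set (Option V)).ncard := Set.ncard_le_ncard hsub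
      _ ≤ treeDepth G + 1 := by simp
  | some b =>
    have hsub : {a | coneRel r a (some b)} ⊆ insert none (some '' {a | r a b}) := by
      rintro (_ | a) ha
      exacts [.inl rfl, .inr ⟨a, ha, rfl⟩]
    calc {a | coneRel r a (some b)}.ncard
        ≤ (insert none (some '' {a | r a b})).ncard := Set.ncard_le_ncard hsub
      _ ≤ (some '' {a | r a b}).ncard + 1 := Set.ncard_insert_le _ _
      _ = {a | r a b}.ncard + 1 := by
        rw [Set.ncard_image_of_injective _ (Option.some_injective V)]
      _ ≤ treeDepth G + 1 := by gcongr; exact hk b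

theorem IsForestOrder.disjointCopies {G : SimpleGraph V} {r : V → V → Prop}
    (hr : IsForestOrder G r) (ι : Type v) :
    IsForestOrder (disjointCopies ι G) fun x y => x.1 = y.1 ∧ r x.2 y.2 := by
  have ⟨hpo, _, hcomp⟩ := hr
  refine ⟨{ refl := ?_, trans := ?_, antisymm := ?_ }, ?_, ?_⟩
  · exact fun x => ⟨rfl, hpo.refl x.2⟩
  · exact fun x y z hxy hyz => ⟨hxy.1.trans hyz.1, hpo.trans _ _ _ hxy.2 hyz.2⟩
  · exact fun x y hxy hyx => Prod.ext hxy.1 (hpo.antisymm _ _ hxy.2 hyx.2)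
  · exact fun z x hx y hy _ => (hr.rel_or_rel hx.2 hy.2).imp
      (⟨hx.1.trans hy.1.symm, ·⟩) (⟨hy.1.trans hx.1.symm, ·⟩)
  · rintro x y (⟨h, -⟩ | ⟨hxy, h⟩)
    · exact h.elim
    · exact (hcomp _ _ hxy).imp (⟨h, ·⟩) (⟨h.symm, ·⟩)

theorem treeDepth_disjointCopies_le [Finite V] (ι : Type v) (G : SimpleGraph V) :
    treeDepth (disjointCopies ι G) ≤ treeDepth G := by
  obtain ⟨r, hr, hk⟩ := exists_isForestOrder_ncard_le_treeDepth G
  refine (hr.disjointCopies ι).treeDepth_le fun y => ?_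
  refine (Set.ncard_le_ncard_of_injOn Prod.snd (fun x hx => hx.2) ?_).trans (hk y.2)
  exact fun x hx z hz hxz => Prod.ext (hx.1.trans hz.1.symm) hxz

theorem treeDepth_coneGraph_disjointCopies_le [Finite ι] [Finite V] (G : SimpleGraph V) :
    treeDepth (coneGraph (disjointCopies ι G)) ≤ treeDepth G + 1 :=
  (treeDepth_coneGraph_le _).trans (Nat.add_le_add_right (treeDepth_disjointCopies_le ι G) 1)

theorem treeDepth_bot_le_one (V : Type u) : treeDepth (⊥ : SimpleGraph V) ≤ 1 := by
  refine IsForestOrder.treeDepth_le (r := Eq) ⟨?_, ?_, fun _ _ h => h.elim⟩ fun v => ?_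
  · exact { refl := Eq.refl, trans := fun _ _ _ => Eq.trans, antisymm := fun _ _ h _ => h }
  · exact fun _ _ hx _ hy _ => .inl (hx.trans hy.symm)
  · exact (Set.ncard_singleton v).le

end Cone

/-! ### Defective colourings -/

section Colouring

variable {V : Type u}

theorem DefColorable.of_containsSubgraph [Finite V] {α : Type v} {G : SimpleGraph V}
    {H : SimpleGraph α} {k d : ℕ} (hG : DefColorable G k d) (hH : ContainsSubgraph G H) :
    DefColorable H k d := by
  obtain ⟨c, hc⟩ := hG
  obtain ⟨f, hf⟩ := hH
  refine ⟨c ∘ f, fun v => le_trans ?_ (hc (f v))⟩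
  exact Set.ncard_le_ncard_of_injOn f (fun w hw => ⟨f.map_adj hw.1, hw.2⟩) hf.injOn

theorem DefColorable.of_iso [Finite V] {α : Type v} {G : SimpleGraph V}
    {H : SimpleGraph α} {k d : ℕ} (hG : DefColorable G k d) (e : G ≃g H) :
    DefColorable H k d :=
  hG.of_containsSubgraph (.of_iso e.symm)

theorem not_defColorable_zero [Nonempty V] (G : SimpleGraph V) (d : ℕ) :
    ¬ DefColorable G 0 d := fun ⟨c, _⟩ => (c (Classical.arbitrary V)).elim0

theorem exists_copy_forall_ne_apex {ι C : Type*} [Finite ι] [Finite V] {G : SimpleGraph V}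
    {c : Option (ι × V) → C} {d : ℕ} (hd : d < Nat.card ι)
    (hc : {w | (coneGraph (disjointCopies ι G)).Adj none w ∧ c w = c none}.ncard ≤ d) :
    ∃ i, ∀ a, c (some (i, a)) ≠ c none := by
  by_contra! hall
  choose a ha using hall
  have hinj : Function.Injective fun i => some (i, a i) := fun i j hij =>
    congrArg Prod.fst (Option.some_injective _ hij)
  refine absurd hc (hd.trans_le ?_).not_ge
  calc Nat.card ι
      = (Set.range fun i => some (i, a i)).ncard := (Set.ncard_range_of_injective hinj).symm
    _ ≤ {w | (coneGraph (disjointCopies ι G)).Adj none w ∧ c w = c none}.ncard :=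
      Set.ncard_le_ncard (Set.range_subset_iff.2 fun i => ⟨trivial, ha i⟩)

theorem DefColorable.of_coneGraph_disjointCopies {ι : Type*} [Finite ι] [Finite V]
    {G : SimpleGraph V} {k d : ℕ} (hd : d < Nat.card ι)
    (h : DefColorable (coneGraph (disjointCopies ι G)) (k + 1) d) : DefColorable G k d := by
  obtain ⟨c, hc⟩ := h
  obtain ⟨i, hi⟩ := exists_copy_forall_ne_apex hd (hc none)
  choose c' hc' using fun a => Fin.exists_succAbove_eq (hi a)
  refine ⟨c', fun v => le_trans ?_ (hc (some (i, v)))⟩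
  refine Set.ncard_le_ncard_of_injOn (fun w => some (i, w)) ?_ ?_
  · rintro w ⟨hvw, hcol⟩
    exact ⟨boxProd_adj_right.2 hvw, by rw [← hc', ← hc', hcol]⟩
  · exact fun a _ b _ hab => congrArg Prod.snd (Option.some_injective _ hab)

end Colouring

/-! ### The graphs `G(s, N)` -/

instance GVert.instFinite (t N : ℕ) : Finite (GVert t N) := by
  induction t with
  | zero => exact inferInstanceAs (Finite (Fin (N + 2)))
  | succ t ih => exact inferInstanceAs (Finite (Option (Fin (N + 1) × GVert t N)))

/-- The star with `n` leaves as the cone over `n` copies of the one-vertex graph. -/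
def starGraphIso (n : ℕ) :
    starGraph (0 : Fin (n + 1)) ≃g coneGraph (disjointCopies (Fin n) (⊥ : SimpleGraph Unit)) where
  toEquiv := (finSuccEquiv n).trans (Equiv.prodPUnit (Fin n)).symm.optionCongr
  map_rel_iff' {i j} := by
    cases i using Fin.cases <;> cases j using Fin.cases <;>
      simp [coneGraph, boxProd_adj, (Fin.succ_ne_zero _).symm, -Equiv.optionCongr_symm]

/-- The star `G(2, N)` as the cone over `N + 1` copies of the one-vertex graph. -/
def GGraph.zeroIso (N : ℕ) :
    GGraph 0 N ≃g coneGraph (disjointCopies (Fin (N + 1)) (⊥ : SimpleGraph Unit)) :=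
  starGraphIso (N + 1)

/-- `G(s + 1, N)` as the cone over `N + 1` copies of `G(s, N)`. -/
def GGraph.succIso (t N : ℕ) :
    GGraph (t + 1) N ≃g coneGraph (disjointCopies (Fin (N + 1)) (GGraph t N)) where
  toEquiv := Equiv.refl (Option (Fin (N + 1) × GVert t N))
  map_rel_iff' {x y} := by
    refine Iff.trans ?_ (fromRel_adj (V := Option (Fin (N + 1) × GVert t N)) _ x y).symm
    change (coneGraph _).Adj x y ↔ _
    rcases x with _ | ⟨i, a⟩ <;> rcases y with _ | ⟨j, b⟩ <;>
      grind [coneGraph, boxProd_adj, bot_adj, adj_comm, Adj.ne]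

theorem treeDepth_GGraph_le (t N : ℕ) : treeDepth (GGraph t N) ≤ t + 2 := by
  induction t with
  | zero =>
    calc treeDepth (GGraph 0 N)
        ≤ treeDepth (coneGraph (disjointCopies (Fin (N + 1)) (⊥ : SimpleGraph Unit))) :=
          treeDepth_le_of_iso (GGraph.zeroIso N)
      _ ≤ treeDepth (⊥ : SimpleGraph Unit) + 1 := treeDepth_coneGraph_disjointCopies_le _
      _ ≤ 0 + 2 := Nat.add_le_add_right (treeDepth_bot_le_one Unit) 1
  | succ t ih =>
    calc treeDepth (GGraph (t + 1) N)
        ≤ treeDepth (coneGraph (disjointCopies (Fin (N + 1)) (GGraph t N))) :=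
          treeDepth_le_of_iso (GGraph.succIso t N)
      _ ≤ treeDepth (GGraph t N) + 1 := treeDepth_coneGraph_disjointCopies_le _
      _ ≤ t + 1 + 2 := by omega

theorem not_defColorable_GGraph (t N : ℕ) : ¬ DefColorable (GGraph t N) (t + 1) N := by
  have hN : N < Nat.card (Fin (N + 1)) := by simp
  induction t with
  | zero =>
    exact fun h => not_defColorable_zero (⊥ : SimpleGraph Unit) N
      ((h.of_iso (GGraph.zeroIso N)).of_coneGraph_disjointCopies hN)
  | succ t ih =>
    exact fun h => ih ((h.of_iso (GGraph.succIso t N)).of_coneGraph_disjointCopies hN)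

theorem stmt15_general {α : Type v} (H : SimpleGraph α) (h3 : 3 ≤ treeDepth H) (N : ℕ) :
    (¬ IsMinor H (GGraph (treeDepth H - 3) N) ∧
      ¬ DefColorable (GGraph (treeDepth H - 3) N) (treeDepth H - 2) N) ∧
    ∀ d : ℕ, ∃ (W : Type) (_ : Fintype W) (G : SimpleGraph W),
      ¬ IsMinor H G ∧ ¬ DefColorable G (treeDepth H - 2) d := by
  obtain ⟨t, ht⟩ := Nat.exists_eq_add_of_le' h3
  rw [ht, Nat.add_sub_cancel]
  have hmain : ∀ M, ¬ IsMinor H (GGraph t M) ∧ ¬ DefColorable (GGraph t M) (t + 1) M := by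
    refine fun M => ⟨fun hM => ?_, not_defColorable_GGraph t M⟩
    have := hM.treeDepth_le.trans (treeDepth_GGraph_le t M)
    omega
  exact ⟨hmain N, fun d => ⟨GVert t d, Fintype.ofFinite _, GGraph t d, hmain d⟩⟩

/-- For every finite simple graph `H` with tree-depth at least 3 and every `N ≥ 1`, the graph
`G(td(H)-1, N)` has no `H` minor and is not `(td(H)-2, N)`-colourable; consequently, for every
`d` there is an `H`-minor-free finite simple graph that is not `(td(H)-2, d)`-colourable. -/
theorem stmt15 {α : Type} [Fintype α] (H : SimpleGraph α) (h3 : 3 ≤ treeDepth H)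
    (N : ℕ) (hN : 1 ≤ N) :
    (¬ IsMinor H (GGraph (treeDepth H - 3) N) ∧
      ¬ DefColorable (GGraph (treeDepth H - 3) N) (treeDepth H - 2) N) ∧
    ∀ d : ℕ, ∃ (W : Type) (_ : Fintype W) (G : SimpleGraph W),
      ¬ IsMinor H G ∧ ¬ DefColorable G (treeDepth H - 2) d :=
  stmt15_general H h3 N
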